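/- Let k be a field and let R be a noetherian Hopf k-algebra such that R⊗_k R is a domain, and suppose the Ore extension T=R[x;σ,δ] admits a Hopf algebra structure with R a Hopf subalgebra. Then after a change of the variable x (with corresponding adjustments to σ and δ) one can ensure that ε(x)=0 and that Δ(x) = s(1⊗x) + t(x⊗1) + w for some s, t, w ∈ R⊗_k R; i.e., in the expression Δ(x) = s(1⊗x) + t(x⊗1) + v(x⊗x) + w with s,t,v,w ∈ R⊗_k R, the coefficient v is zero. -/

import Mathlib

open scoped TensorProduct

/-- `T` is an Ore (skew polynomial) extension `R[x; σ, δ]` of `R`, embedded via `ι`: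
`δ` is a `σ`-derivation, `ι` is injective, `x · ι(r) = ι(σ r) · x + ι(δ r)`, and
`T` is a free left `R`-module with basis `{xⁱ : i ≥ 0}`. -/
structure IsOreExtension (k : Type*) {R T : Type*} [Field k] [Ring R] [Algebra k R]
    [Ring T] [Algebra k T] (σ : R ≃ₐ[k] R) (δ : R →ₗ[k] R) (ι : R →ₐ[k] T) (x : T) : Prop where
  isSigmaDerivation : ∀ a b : R, δ (a * b) = σ a * δ b + δ a * b
  injective : Function.Injective ι
  rel : ∀ r : R, x * ι r = ι (σ r) * x + ι (δ r)
  free : ∀ t : T, ∃! a : ℕ →₀ R, t = a.sum fun i r => ι r * x ^ i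

/-- A Hopf `k`-algebra structure on the `k`-algebra `T`, bundled as data. -/
structure HopfAlgebraStructure (k T : Type*) [Field k] [Ring T] [Algebra k T] where
  comul : T →ₗ[k] T ⊗[k] T
  counit : T →ₗ[k] k
  antipode : T →ₗ[k] T
  comul_one : comul 1 = 1
  comul_mul : ∀ a b : T, comul (a * b) = comul a * comul b
  counit_one : counit 1 = 1
  counit_mul : ∀ a b : T, counit (a * b) = counit a * counit b
  coassoc : ∀ t : T, TensorProduct.map comul LinearMap.id (comul t) =
      (TensorProduct.assoc k T T T).symm (TensorProduct.map LinearMap.id comul (comul t))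
  counit_comul : ∀ t : T,
      TensorProduct.lid k T (TensorProduct.map counit LinearMap.id (comul t)) = t
  comul_counit : ∀ t : T,
      TensorProduct.rid k T (TensorProduct.map LinearMap.id counit (comul t)) = t
  antipode_mul_id : ∀ t : T,
      LinearMap.mul' k T (TensorProduct.map antipode LinearMap.id (comul t))
        = algebraMap k T (counit t)
  id_mul_antipode : ∀ t : T,
      LinearMap.mul' k T (TensorProduct.map LinearMap.id antipode (comul t))
        = algebraMap k T (counit t)

/-- The Hopf algebra structure `H` on `T` extends that of the Hopf algebra `R`, i.e. `R` is
(the image of) a Hopf subalgebra of `T` via the injective algebra map `ι`. -/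
def ExtendsHopf (k : Type*) {R T : Type*} [Field k] [Ring R] [HopfAlgebra k R]
    [Ring T] [Algebra k T] (ι : R →ₐ[k] T) (H : HopfAlgebraStructure k T) : Prop :=
  (∀ r : R, H.counit (ι r) = Coalgebra.counit r) ∧
  (∀ r : R, H.comul (ι r) =
      TensorProduct.map ι.toLinearMap ι.toLinearMap (Coalgebra.comul r)) ∧
  (∀ r : R, H.antipode (ι r) = ι (HopfAlgebra.antipode (R := k) r))

/-!
If `Δ(x)` had degree `n ≥ 2` in one tensor factor, some slice of it would have degree `n` in `x`,
and hence a coproduct of degree `n²`; but by coassociativity that coproduct is a slice of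
`(Δ ⊗ id) (Δ(x))`, of degree at most `n`. So `Δ(x) = s(1 ⊗ x) + t(x ⊗ 1) + v(x ⊗ x) + w`.

Let `β : T → k` be `ε` of the coefficient of `x`. If `v ≠ 0`, comparing coefficients of `x ⊗ x` in
`((id ⊗ β)Δ ⊗ id) (Δ(x)) = (id ⊗ (β ⊗ id)Δ) (Δ(x))` shows that `(id ⊗ β) (Δ(x))` and
`z = (β ⊗ id) (Δ(x))` have the same leading coefficient, a nonzero scalar `c`. The remaining
coefficients then give `c Δ(z) = v(z ⊗ z)`, and `ε(z) = β(x) = 1`, so applying the antipode to the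
left factor makes `z` left invertible. But `z` has degree one, while a left invertible element of an
Ore extension of a domain has degree zero. Hence `v = 0` for every choice of `x`, and `x - ε(x)` is
a choice with `ε = 0`.
-/

section Slice

variable {k M N P : Type*} [CommSemiring k] [AddCommMonoid M] [Module k M]
  [AddCommMonoid N] [Module k N] [AddCommMonoid P] [Module k P]

/-- The slice map `f ⊗ id : M ⊗ N → N` of a functional `f` on the left factor. -/
noncomputable def sliceLeft (N : Type*) [AddCommMonoid N] [Module k N] (f : M →ₗ[k] k) :
    M ⊗[k] N →ₗ[k] N :=
  TensorProduct.lid k N ∘ₗ f.rTensor N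

/-- The slice map `id ⊗ f : M ⊗ N → M` of a functional `f` on the right factor. -/
noncomputable def sliceRight (M : Type*) [AddCommMonoid M] [Module k M] (f : N →ₗ[k] k) :
    M ⊗[k] N →ₗ[k] M :=
  TensorProduct.rid k M ∘ₗ f.lTensor M

@[simp]
theorem sliceLeft_tmul (f : M →ₗ[k] k) (m : M) (n : N) : sliceLeft N f (m ⊗ₜ n) = f m • n := by
  simp [sliceLeft]

@[simp]
theorem sliceRight_tmul (f : N →ₗ[k] k) (m : M) (n : N) : sliceRight M f (m ⊗ₜ n) = f n • m := by
  simp [sliceRight]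

theorem sliceLeft_lTensor (f : M →ₗ[k] k) (g : N →ₗ[k] P) (u : M ⊗[k] N) :
    sliceLeft P f (g.lTensor M u) = g (sliceLeft N f u) := by
  induction u using TensorProduct.induction_on <;> simp_all

theorem sliceRight_rTensor (f : N →ₗ[k] k) (g : M →ₗ[k] P) (u : M ⊗[k] N) :
    sliceRight P f (g.rTensor N u) = g (sliceRight M f u) := by
  induction u using TensorProduct.induction_on <;> simp_all

theorem sliceLeft_comm (f : N →ₗ[k] k) (u : M ⊗[k] N) :
    sliceLeft M f (TensorProduct.comm k M N u) = sliceRight M f u := by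
  induction u using TensorProduct.induction_on <;> simp_all

theorem sliceLeft_assoc (f : M →ₗ[k] k) (u : (M ⊗[k] N) ⊗[k] P) :
    sliceLeft (N ⊗[k] P) f (TensorProduct.assoc k M N P u) = (sliceLeft N f).rTensor P u :=
  LinearMap.congr_fun (f := sliceLeft (N ⊗[k] P) f ∘ₗ TensorProduct.assoc k M N P)
    (by ext; simp [TensorProduct.smul_tmul']) u

theorem lTensor_sliceRight_assoc (f : P →ₗ[k] k) (u : (M ⊗[k] N) ⊗[k] P) :
    (sliceRight N f).lTensor M (TensorProduct.assoc k M N P u) = sliceRight (M ⊗[k] N) f u :=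
  LinearMap.congr_fun (f := (sliceRight N f).lTensor M ∘ₗ TensorProduct.assoc k M N P)
    (by ext; simp) u

theorem lTensor_sliceLeft_assoc (f : N →ₗ[k] k) (u : (M ⊗[k] N) ⊗[k] P) :
    (sliceLeft P f).lTensor M (TensorProduct.assoc k M N P u) = (sliceRight M f).rTensor P u :=
  LinearMap.congr_fun (f := (sliceLeft P f).lTensor M ∘ₗ TensorProduct.assoc k M N P)
    (by ext; simp [TensorProduct.smul_tmul]) u

theorem exists_sliceLeft_ne_zero [Module.Free k M] {u : M ⊗[k] N} (hu : u ≠ 0) :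
    ∃ f : M →ₗ[k] k, sliceLeft N f u ≠ 0 := by
  classical
  contrapose! hu
  let b := Module.Free.chooseBasis k M
  refine (TensorProduct.equivFinsuppOfBasisLeft b).injective (Finsupp.ext fun i => ?_)
  simpa [TensorProduct.equivFinsuppOfBasisLeft_apply, sliceLeft] using hu (b.coord i)

end Slice

section Hit

open Coalgebra

variable {k C : Type*} [CommSemiring k] [AddCommMonoid C] [Module k C] [Coalgebra k C]

/-- The left action `f ⇀ c = (id ⊗ f) (Δ c)` of the dual algebra `C*` on the coalgebra `C`. -/
noncomputable def leftHit (f : C →ₗ[k] k) : C →ₗ[k] C :=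
  sliceRight C f ∘ₗ comul

/-- The right action `c ↼ f = (f ⊗ id) (Δ c)` of the dual algebra `C*` on the coalgebra `C`. -/
noncomputable def rightHit (f : C →ₗ[k] k) : C →ₗ[k] C :=
  sliceLeft C f ∘ₗ comul

theorem leftHit_apply (f : C →ₗ[k] k) (c : C) : leftHit f c = sliceRight C f (comul c) := rfl

theorem rightHit_apply (f : C →ₗ[k] k) (c : C) : rightHit f c = sliceLeft C f (comul c) := rfl

theorem comul_rightHit (f : C →ₗ[k] k) (c : C) :
    comul (rightHit f c) = (rightHit f).rTensor C (comul (R := k) c) := by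
  rw [rightHit_apply, ← sliceLeft_lTensor, ← coassoc_apply, sliceLeft_assoc, rightHit,
    LinearMap.rTensor_comp_apply]

theorem comul_leftHit (f : C →ₗ[k] k) (c : C) :
    comul (leftHit f c) = (leftHit f).lTensor C (comul (R := k) c) := by
  rw [leftHit_apply, ← sliceRight_rTensor, ← lTensor_sliceRight_assoc, coassoc_apply, leftHit,
    LinearMap.lTensor_comp_apply]

theorem rTensor_leftHit_comul (f : C →ₗ[k] k) (c : C) :
    (leftHit f).rTensor C (comul c) = (rightHit f).lTensor C (comul c) := by
  rw [leftHit, LinearMap.rTensor_comp_apply, ← lTensor_sliceLeft_assoc, coassoc_apply, rightHit,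
    LinearMap.lTensor_comp_apply]

theorem leftHit_counit (c : C) : leftHit (counit (R := k)) c = c := by
  simp [leftHit, sliceRight]

theorem rightHit_counit (c : C) : rightHit (counit (R := k)) c = c := by
  simp [rightHit, sliceLeft]

theorem counit_leftHit (f : C →ₗ[k] k) (c : C) : counit (leftHit f c) = f c := by
  have slice_swap (u : C ⊗[k] C) :
      counit (sliceRight C f u) = f (sliceLeft C (counit (R := k)) u) := by
    induction u using TensorProduct.induction_on <;> simp_all [mul_comm]
  rw [leftHit_apply, slice_swap, ← rightHit_apply, rightHit_counit]

theorem counit_rightHit (f : C →ₗ[k] k) (c : C) : counit (rightHit f c) = f c := by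
  have slice_swap (u : C ⊗[k] C) :
      counit (sliceLeft C f u) = f (sliceRight C (counit (R := k)) u) := by
    induction u using TensorProduct.induction_on <;> simp_all [mul_comm]
  rw [rightHit_apply, slice_swap, ← leftHit_apply, leftHit_counit]

theorem comul_injective : Function.Injective (comul (R := k) (A := C)) := fun a b hab => by
  rw [← leftHit_counit (k := k) a, leftHit_apply, hab, ← leftHit_apply, leftHit_counit]

end Hit

section TensorMap

variable {k R R' T T' : Type*} [CommSemiring k] [Semiring R] [Algebra k R] [Semiring R']
  [Algebra k R'] [Semiring T] [Algebra k T] [Semiring T'] [Algebra k T']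
  {ι : R →ₐ[k] T} {ι' : R' →ₐ[k] T'}

theorem tensorMap_mem_range (s : R ⊗[k] R') :
    Algebra.TensorProduct.map ι ι' s ∈ (Algebra.TensorProduct.map (AlgHom.id k T) ι').range :=
  ⟨Algebra.TensorProduct.map ι (AlgHom.id k R') s, by
    induction s using TensorProduct.induction_on <;> simp_all⟩

theorem tensorMap_map_mul {A A' : Type*} [Semiring A] [Algebra k A] [Semiring A'] [Algebra k A']
    {φ : T →ₗ[k] A} {ψ : T' →ₗ[k] A'} {α : R →ₐ[k] A} {α' : R' →ₐ[k] A'}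
    (hφ : ∀ r t, φ (ι r * t) = α r * φ t) (hψ : ∀ r t, ψ (ι' r * t) = α' r * ψ t)
    (s : R ⊗[k] R') (u : T ⊗[k] T') :
    TensorProduct.map φ ψ (Algebra.TensorProduct.map ι ι' s * u) =
      Algebra.TensorProduct.map α α' s * TensorProduct.map φ ψ u := by
  induction s using TensorProduct.induction_on with
  | zero => simp
  | add s s' hs hs' => simp only [map_add, add_mul, hs, hs']
  | tmul r r' =>
    induction u using TensorProduct.induction_on with
    | zero => simp
    | add u u' hu hu' => simp only [map_add, mul_add, hu, hu']
    | tmul t t' => simp [hφ, hψ]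

end TensorMap

section Bialgebra

open Coalgebra

variable {k R T : Type*} [CommSemiring k] [Semiring R] [Bialgebra k R] [Semiring T]
  [Bialgebra k T] {ι : R →ₐ[k] T}

theorem rightHit_algHom_mul
    (hΔ : ∀ r, comul (ι r) = Algebra.TensorProduct.map ι ι (comul (R := k) r)) {f : T →ₗ[k] k}
    (hf : ∀ r t, f (ι r * t) = counit (R := k) r * f t) (r : R) (t : T) :
    rightHit f (ι r * t) = ι r * rightHit f t := by
  have map_comul :
      Algebra.TensorProduct.map (Bialgebra.counitAlgHom k R) ι (comul r) = 1 ⊗ₜ[k] ι r :=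
    calc Algebra.TensorProduct.map (Bialgebra.counitAlgHom k R) ι (comul r)
        = ι.toLinearMap.lTensor k ((counit (R := k)).rTensor R (comul r)) := by
          rw [← LinearMap.comp_apply, LinearMap.lTensor_comp_rTensor]; rfl
      _ = 1 ⊗ₜ[k] ι r := by rw [rTensor_counit_comul]; rfl
  change Algebra.TensorProduct.lid k T (TensorProduct.map f LinearMap.id (comul (ι r * t))) =
    ι r * Algebra.TensorProduct.lid k T (TensorProduct.map f LinearMap.id (comul t))
  rw [Bialgebra.comul_mul, hΔ, tensorMap_map_mul (α := Bialgebra.counitAlgHom k R) (α' := ι) hf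
    (fun _ _ => rfl), map_comul, map_mul, Algebra.TensorProduct.lid_tmul, one_smul]

theorem leftHit_algHom_mul
    (hΔ : ∀ r, comul (ι r) = Algebra.TensorProduct.map ι ι (comul (R := k) r)) {f : T →ₗ[k] k}
    (hf : ∀ r t, f (ι r * t) = counit (R := k) r * f t) (r : R) (t : T) :
    leftHit f (ι r * t) = ι r * leftHit f t := by
  have map_comul :
      Algebra.TensorProduct.map ι (Bialgebra.counitAlgHom k R) (comul r) = ι r ⊗ₜ[k] 1 :=
    calc Algebra.TensorProduct.map ι (Bialgebra.counitAlgHom k R) (comul r)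
        = ι.toLinearMap.rTensor k ((counit (R := k)).lTensor R (comul r)) := by
          rw [← LinearMap.comp_apply, LinearMap.rTensor_comp_lTensor]; rfl
      _ = ι r ⊗ₜ[k] 1 := by rw [lTensor_counit_comul]; rfl
  change Algebra.TensorProduct.rid k k T (TensorProduct.map LinearMap.id f (comul (ι r * t))) =
    ι r * Algebra.TensorProduct.rid k k T (TensorProduct.map LinearMap.id f (comul t))
  rw [Bialgebra.comul_mul, hΔ, tensorMap_map_mul (α := ι) (α' := Bialgebra.counitAlgHom k R)
    (fun _ _ => rfl) hf, map_comul, map_mul, Algebra.TensorProduct.rid_tmul, one_smul]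

theorem exists_algebraMap_eq_of_tmul_one_eq {a b : R} (h : a ⊗ₜ[k] 1 = 1 ⊗ₜ[k] b) :
    ∃ c, a = algebraMap k R c ∧ b = algebraMap k R c := by
  have a_eq := congrArg (sliceRight R (counit (R := k))) h
  have b_eq := congrArg (sliceLeft R (counit (R := k))) h
  simp only [sliceRight_tmul, sliceLeft_tmul, Bialgebra.counit_one, one_smul] at a_eq b_eq
  refine ⟨counit b, by rw [a_eq, Algebra.algebraMap_eq_smul_one], ?_⟩
  rw [← b_eq, a_eq]
  simp [Algebra.algebraMap_eq_smul_one]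

theorem exists_mul_eq_one_of_comul_eq {k A : Type*} [CommSemiring k] [Semiring A]
    [HopfAlgebra k A] {z : A} {a : A ⊗[k] A} (hz : comul z = a * (1 ⊗ₜ z))
    (hz' : counit (R := k) z = 1) :
    ∃ u, u * z = 1 := by
  have mul_rTensor (b : A ⊗[k] A) :
      LinearMap.mul' k A ((HopfAlgebra.antipode k).rTensor A (b * (1 ⊗ₜ z))) =
        LinearMap.mul' k A ((HopfAlgebra.antipode k).rTensor A b) * z := by
    induction b using TensorProduct.induction_on <;> simp_all [add_mul, mul_assoc]
  refine ⟨LinearMap.mul' k A ((HopfAlgebra.antipode k).rTensor A a), ?_⟩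
  rw [← mul_rTensor, ← hz, HopfAlgebra.mul_antipode_rTensor_comul_apply, hz', map_one]

end Bialgebra

namespace IsOreExtension

section Coefficients

variable {k R T : Type*} [Field k] [Ring R] [Algebra k R] [Ring T] [Algebra k T]

/-- The evaluation `a ↦ ∑ ι(aᵢ) yⁱ` of polynomials with coefficients written on the left. -/
noncomputable def leftEval (ι : R →ₐ[k] T) (y : T) : (ℕ →₀ R) →ₗ[k] T :=
  Finsupp.lsum k fun i => LinearMap.mulRight k (y ^ i) ∘ₗ ι.toLinearMap

theorem leftEval_apply (ι : R →ₐ[k] T) (y : T) (a : ℕ →₀ R) :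
    leftEval ι y a = a.sum fun i r => ι r * y ^ i := rfl

theorem leftEval_single (ι : R →ₐ[k] T) (y : T) (i : ℕ) (r : R) :
    leftEval ι y (Finsupp.single i r) = ι r * y ^ i := by
  simp [leftEval]

theorem leftEval_bijective_iff {ι : R →ₐ[k] T} {y : T} :
    Function.Bijective (leftEval ι y) ↔
      ∀ t : T, ∃! a : ℕ →₀ R, t = a.sum fun i r => ι r * y ^ i := by
  simp only [Function.bijective_iff_existsUnique, leftEval_apply, eq_comm]

variable {σ : R ≃ₐ[k] R} {δ : R →ₗ[k] R} {ι : R →ₐ[k] T} {x : T} (hT : IsOreExtension k σ δ ι x)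
include hT

/-- The isomorphism of `T` with finitely supported sequences of left coefficients. -/
noncomputable def coeffEquiv : T ≃ₗ[k] (ℕ →₀ R) :=
  (LinearEquiv.ofBijective (leftEval ι x) (leftEval_bijective_iff.2 hT.free)).symm

/-- The left coefficient of `xⁱ` in the basis `{xⁱ}` of `T` over `R`. -/
noncomputable def coeff (i : ℕ) : T →ₗ[k] R :=
  Finsupp.lapply i ∘ₗ hT.coeffEquiv.toLinearMap

theorem coeff_leftEval (a : ℕ →₀ R) (i : ℕ) : hT.coeff i (leftEval ι x a) = a i :=
  DFunLike.congr_fun (hT.coeffEquiv.apply_symm_apply a) i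

theorem leftEval_coeffEquiv (t : T) : leftEval ι x (hT.coeffEquiv t) = t :=
  hT.coeffEquiv.symm_apply_apply t

theorem ext_coeff {t u : T} (h : ∀ i, hT.coeff i t = hT.coeff i u) : t = u :=
  hT.coeffEquiv.injective (Finsupp.ext h)

theorem coeff_ι_mul_pow (i j : ℕ) (r : R) :
    hT.coeff i (ι r * x ^ j) = if j = i then r else 0 := by
  classical
  rw [← leftEval_single, coeff_leftEval, Finsupp.single_apply]

theorem coeff_ι (i : ℕ) (r : R) : hT.coeff i (ι r) = if 0 = i then r else 0 := by
  simpa using hT.coeff_ι_mul_pow i 0 r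

theorem coeff_one (i : ℕ) : hT.coeff i 1 = if 0 = i then 1 else 0 := by
  simpa using hT.coeff_ι i 1

theorem coeff_var (i : ℕ) : hT.coeff i x = if 1 = i then 1 else 0 := by
  simpa using hT.coeff_ι_mul_pow i 1 1

@[elab_as_elim]
theorem monomial_induction {p : T → Prop} (monomial : ∀ i r, p (ι r * x ^ i))
    (add : ∀ t u, p t → p u → p (t + u)) (t : T) : p t := by
  rw [← hT.leftEval_coeffEquiv t]
  induction hT.coeffEquiv t using Finsupp.induction_linear with
  | zero => simpa using monomial 0 0
  | add a b ha hb => rw [map_add]; exact add _ _ ha hb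
  | single i r => rw [leftEval_single]; exact monomial i r

theorem coeff_ι_mul (r : R) (t : T) (i : ℕ) : hT.coeff i (ι r * t) = r * hT.coeff i t := by
  induction t using hT.monomial_induction with
  | monomial j s => simp [← mul_assoc, ← map_mul, coeff_ι_mul_pow]
  | add t u ht hu => simp only [mul_add, map_add, ht, hu]

theorem coeff_var_mul_succ (t : T) (i : ℕ) :
    hT.coeff (i + 1) (x * t) = σ (hT.coeff i t) + δ (hT.coeff (i + 1) t) := by
  induction t using hT.monomial_induction with
  | monomial j s =>
    rw [← mul_assoc, hT.rel, add_mul, mul_assoc, ← pow_succ', map_add]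
    simp only [coeff_ι_mul_pow, add_left_inj, apply_ite σ, apply_ite δ, map_zero]
  | add t u ht hu => simp only [mul_add, map_add, ht, hu]; abel

end Coefficients

section Degree

variable {k R T : Type*} [Field k] [Ring R] [Algebra k R] [Ring T] [Algebra k T]
  {σ : R ≃ₐ[k] R} {δ : R →ₗ[k] R} {ι : R →ₐ[k] T} {x : T} (hT : IsOreExtension k σ δ ι x)
include hT

/-- The elements of `T` of degree at most `n` in `x`. -/
noncomputable def degreeLE (n : ℕ) : Submodule k T :=
  ⨅ i, ⨅ _ : n < i, LinearMap.ker (hT.coeff i)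

theorem mem_degreeLE {n : ℕ} {t : T} : t ∈ hT.degreeLE n ↔ ∀ i, n < i → hT.coeff i t = 0 := by
  simp [degreeLE]

theorem degreeLE_mono {m n : ℕ} (hmn : m ≤ n) : hT.degreeLE m ≤ hT.degreeLE n := fun _ ht =>
  hT.mem_degreeLE.2 fun i hi => hT.mem_degreeLE.1 ht i (hmn.trans_lt hi)

theorem ι_mem_degreeLE (r : R) (n : ℕ) : ι r ∈ hT.degreeLE n :=
  hT.mem_degreeLE.2 fun i hi => by rw [coeff_ι, if_neg (by lia)]

theorem ι_mul_mem_degreeLE (r : R) {n : ℕ} {t : T} (ht : t ∈ hT.degreeLE n) :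
    ι r * t ∈ hT.degreeLE n :=
  hT.mem_degreeLE.2 fun i hi => by rw [coeff_ι_mul, hT.mem_degreeLE.1 ht i hi, mul_zero]

theorem eq_sum_of_mem_degreeLE {n : ℕ} {t : T} (ht : t ∈ hT.degreeLE n) :
    t = ∑ i ∈ Finset.range (n + 1), ι (hT.coeff i t) * x ^ i := by
  refine hT.ext_coeff fun j => ?_
  simp only [map_sum, coeff_ι_mul_pow, Finset.sum_ite_eq', Finset.mem_range]
  split_ifs with hj
  · rfl
  · exact hT.mem_degreeLE.1 ht j (by lia)

theorem exists_mem_degreeLE_coeff_ne_zero {t : T} (ht : t ≠ 0) :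
    ∃ n, t ∈ hT.degreeLE n ∧ hT.coeff n t ≠ 0 := by
  have support_nonempty : (hT.coeffEquiv t).support.Nonempty := by simpa using ht
  refine ⟨_, hT.mem_degreeLE.2 fun i hi => ?_,
    Finsupp.mem_support_iff.1 (Finset.max'_mem _ support_nonempty)⟩
  contrapose! hi
  exact Finset.le_max' _ _ (Finsupp.mem_support_iff.2 hi)

theorem pow_mul_mem_degreeLE (m : ℕ) {n : ℕ} {t : T} (ht : t ∈ hT.degreeLE n) :
    x ^ m * t ∈ hT.degreeLE (m + n) := by
  induction m with
  | zero => simpa using ht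
  | succ m ih =>
    rw [mem_degreeLE] at ih ⊢
    rintro (_ | i) hi
    · lia
    · rw [pow_succ', mul_assoc, coeff_var_mul_succ, ih i (by lia), ih (i + 1) (by lia),
        map_zero, map_zero, add_zero]

theorem coeff_pow_mul (m : ℕ) {n : ℕ} {t : T} (ht : t ∈ hT.degreeLE n) :
    hT.coeff (m + n) (x ^ m * t) = (σ ^ m) (hT.coeff n t) := by
  induction m with
  | zero => simp
  | succ m ih =>
    have coeff_succ := hT.mem_degreeLE.1 (hT.pow_mul_mem_degreeLE m ht) (m + n + 1) (by lia)
    rw [pow_succ', mul_assoc, Nat.add_right_comm, coeff_var_mul_succ, ih, coeff_succ, map_zero,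
      add_zero, pow_succ', AlgEquiv.mul_apply]

theorem mul_mem_degreeLE {m n : ℕ} {u t : T} (hu : u ∈ hT.degreeLE m) (ht : t ∈ hT.degreeLE n) :
    u * t ∈ hT.degreeLE (m + n) := by
  rw [hT.eq_sum_of_mem_degreeLE hu, Finset.sum_mul]
  refine sum_mem fun i hi => ?_
  rw [mul_assoc]
  have hi' : i + n ≤ m + n := by grind
  exact hT.ι_mul_mem_degreeLE _ (hT.degreeLE_mono hi' (hT.pow_mul_mem_degreeLE i ht))

theorem coeff_mul_add {m n : ℕ} {u t : T} (hu : u ∈ hT.degreeLE m) (ht : t ∈ hT.degreeLE n) :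
    hT.coeff (m + n) (u * t) = hT.coeff m u * (σ ^ m) (hT.coeff n t) := by
  conv_lhs => rw [hT.eq_sum_of_mem_degreeLE hu, Finset.sum_mul, map_sum, Finset.sum_range_succ]
  rw [Finset.sum_eq_zero, zero_add, mul_assoc, coeff_ι_mul, hT.coeff_pow_mul m ht]
  intro i hi
  rw [mul_assoc, coeff_ι_mul, hT.mem_degreeLE.1 (hT.pow_mul_mem_degreeLE i ht) _ (by grind),
    mul_zero]

theorem one_mem_degreeLE (n : ℕ) : (1 : T) ∈ hT.degreeLE n := by
  simpa using hT.ι_mem_degreeLE 1 n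

theorem pow_mem_degreeLE {n : ℕ} {t : T} (ht : t ∈ hT.degreeLE n) (j : ℕ) :
    t ^ j ∈ hT.degreeLE (j * n) := by
  induction j with
  | zero => simpa using hT.one_mem_degreeLE 0
  | succ j ih => rw [pow_succ, Nat.succ_mul]; exact hT.mul_mem_degreeLE ih ht

theorem coeff_mul_ne_zero [NoZeroDivisors R] {m n : ℕ} {u t : T} (hu : u ∈ hT.degreeLE m)
    (hu' : hT.coeff m u ≠ 0) (ht : t ∈ hT.degreeLE n) (ht' : hT.coeff n t ≠ 0) :
    hT.coeff (m + n) (u * t) ≠ 0 := by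
  rw [hT.coeff_mul_add hu ht]
  exact mul_ne_zero hu' ((map_ne_zero_iff _ (AlgEquiv.injective _)).2 ht')

theorem coeff_pow_ne_zero [NoZeroDivisors R] [Nontrivial R] {n : ℕ} {t : T}
    (ht : t ∈ hT.degreeLE n) (ht' : hT.coeff n t ≠ 0) (j : ℕ) :
    hT.coeff (j * n) (t ^ j) ≠ 0 := by
  induction j with
  | zero => simp [coeff_one]
  | succ j ih =>
    rw [pow_succ, Nat.succ_mul]
    exact hT.coeff_mul_ne_zero (hT.pow_mem_degreeLE ht j) ih ht ht'

theorem noZeroDivisors [NoZeroDivisors R] : NoZeroDivisors T where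
  eq_zero_or_eq_zero_of_mul_eq_zero {u t} hut := by
    by_contra! hne
    obtain ⟨m, hu, hu'⟩ := hT.exists_mem_degreeLE_coeff_ne_zero hne.1
    obtain ⟨n, ht, ht'⟩ := hT.exists_mem_degreeLE_coeff_ne_zero hne.2
    exact hT.coeff_mul_ne_zero hu hu' ht ht' (by rw [hut, map_zero])

theorem mem_degreeLE_zero_of_mul_eq_one [NoZeroDivisors R] {u t : T} (hut : u * t = 1) :
    t ∈ hT.degreeLE 0 := by
  nontriviality T
  obtain ⟨m, hu, hu'⟩ := hT.exists_mem_degreeLE_coeff_ne_zero (left_ne_zero_of_mul_eq_one hut)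
  obtain ⟨n, ht, ht'⟩ := hT.exists_mem_degreeLE_coeff_ne_zero (right_ne_zero_of_mul_eq_one hut)
  have coeff_one_ne_zero := hT.coeff_mul_ne_zero hu hu' ht ht'
  rw [hut, coeff_one, ite_ne_right_iff] at coeff_one_ne_zero
  exact hT.degreeLE_mono (by lia) ht

end Degree

section ChangeOfVariable

variable {k R T : Type*} [Field k] [Ring R] [Algebra k R] [Ring T] [Algebra k T]
  {σ : R ≃ₐ[k] R} {δ : R →ₗ[k] R} {ι : R →ₐ[k] T} {x y : T}
  (hT : IsOreExtension k σ δ ι x)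
include hT

theorem coeff_pow_eq_one (hy : y ∈ hT.degreeLE 1) (hy' : hT.coeff 1 y = 1) (j : ℕ) :
    hT.coeff j (y ^ j) = 1 := by
  induction j with
  | zero => simp [coeff_one]
  | succ j ih =>
    have pow_mem := hT.pow_mem_degreeLE hy j
    rw [mul_one] at pow_mem
    rw [pow_succ, hT.coeff_mul_add pow_mem hy, ih, hy', map_one, mul_one]

theorem leftEval_injective (hy : y ∈ hT.degreeLE 1) (hy' : hT.coeff 1 y = 1) :
    Function.Injective (leftEval ι y) := by
  rw [injective_iff_map_eq_zero]
  intro a ha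
  by_contra hne
  have support_nonempty : a.support.Nonempty := Finsupp.support_nonempty_iff.2 hne
  obtain ⟨n, hn, hmax⟩ := a.support.exists_max_image id support_nonempty
  refine Finsupp.mem_support_iff.1 hn ?_
  calc a n = hT.coeff n (ι (a n) * y ^ n) := by
        rw [coeff_ι_mul, hT.coeff_pow_eq_one hy hy', mul_one]
    _ = hT.coeff n (leftEval ι y a) := by
        rw [leftEval_apply, Finsupp.sum, map_sum]
        refine Eq.symm (Finset.sum_eq_single_of_mem n hn fun j hj hjn => ?_)
        have pow_mem := hT.pow_mem_degreeLE hy j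
        have hlt : j < n := lt_of_le_of_ne (hmax j hj) hjn
        rw [coeff_ι_mul, hT.mem_degreeLE.1 pow_mem n (by lia), mul_zero]
    _ = 0 := by rw [ha, map_zero]

theorem sub_leading_mem_degreeLE (hy : y ∈ hT.degreeLE 1) (hy' : hT.coeff 1 y = 1) {n : ℕ} {t : T}
    (ht : t ∈ hT.degreeLE (n + 1)) :
    t - ι (hT.coeff (n + 1) t) * y ^ (n + 1) ∈ hT.degreeLE n := by
  have pow_mem := hT.pow_mem_degreeLE hy (n + 1)
  rw [mul_one] at pow_mem
  refine hT.mem_degreeLE.2 fun i hi => ?_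
  obtain rfl | hi' := (Nat.succ_le_of_lt hi).eq_or_lt
  · rw [map_sub, coeff_ι_mul, hT.coeff_pow_eq_one hy hy', mul_one, sub_self]
  · exact hT.mem_degreeLE.1 (sub_mem ht (hT.ι_mul_mem_degreeLE _ pow_mem)) i hi'

theorem degreeLE_le_range_leftEval (hy : y ∈ hT.degreeLE 1) (hy' : hT.coeff 1 y = 1) (n : ℕ) :
    hT.degreeLE n ≤ LinearMap.range (leftEval ι y) := by
  induction n with
  | zero =>
    intro t ht
    refine ⟨Finsupp.single 0 (hT.coeff 0 t), ?_⟩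
    rw [leftEval_single, pow_zero, mul_one]
    simpa using (hT.eq_sum_of_mem_degreeLE ht).symm
  | succ n ih =>
    intro t ht
    rw [← sub_add_cancel t (ι (hT.coeff (n + 1) t) * y ^ (n + 1))]
    exact add_mem (ih (hT.sub_leading_mem_degreeLE hy hy' ht))
      ⟨Finsupp.single _ _, leftEval_single ..⟩

theorem leftEval_surjective (hy : y ∈ hT.degreeLE 1) (hy' : hT.coeff 1 y = 1) :
    Function.Surjective (leftEval ι y) := by
  intro t
  obtain rfl | ht := eq_or_ne t 0
  · exact ⟨0, map_zero _⟩
  · obtain ⟨n, hn, -⟩ := hT.exists_mem_degreeLE_coeff_ne_zero ht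
    exact hT.degreeLE_le_range_leftEval hy hy' n hn

theorem sub_ι (a : R) :
    IsOreExtension k σ (δ + LinearMap.mulRight k a ∘ₗ σ.toLinearMap - LinearMap.mulLeft k a) ι
      (x - ι a) where
  isSigmaDerivation b c := by
    simp only [LinearMap.sub_apply, LinearMap.add_apply, LinearMap.comp_apply,
      LinearMap.mulRight_apply, LinearMap.mulLeft_apply, AlgEquiv.toLinearMap_apply,
      hT.isSigmaDerivation, map_mul]
    noncomm_ring
  injective := hT.injective
  rel r := by
    simp only [LinearMap.sub_apply, LinearMap.add_apply, LinearMap.comp_apply,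
      LinearMap.mulRight_apply, LinearMap.mulLeft_apply, AlgEquiv.toLinearMap_apply,
      sub_mul, hT.rel, map_sub, map_add, map_mul]
    noncomm_ring
  free := by
    have var_mem : x ∈ hT.degreeLE 1 :=
      hT.mem_degreeLE.2 fun i hi => by rw [coeff_var, if_neg (by lia)]
    have sub_mem_degreeLE := sub_mem var_mem (hT.ι_mem_degreeLE a 1)
    have coeff_sub : hT.coeff 1 (x - ι a) = 1 := by simp [coeff_var, coeff_ι]
    exact leftEval_bijective_iff.1 ⟨hT.leftEval_injective sub_mem_degreeLE coeff_sub,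
      hT.leftEval_surjective sub_mem_degreeLE coeff_sub⟩

end ChangeOfVariable

section BaseChange

variable {k R T : Type*} [Field k] [Ring R] [Algebra k R] [Ring T] [Algebra k T]
  {σ : R ≃ₐ[k] R} {δ : R →ₗ[k] R} {ι : R →ₐ[k] T} {x : T}
  (hT : IsOreExtension k σ δ ι x) (B : Type*) [Ring B] [Algebra k B]
include hT

theorem leftEval_baseChange :
    leftEval (Algebra.TensorProduct.map (AlgHom.id k B) ι) ((1 : B) ⊗ₜ[k] x) =
      (TensorProduct.congr (LinearEquiv.refl k B) hT.coeffEquiv ≪≫ₗ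
        TensorProduct.finsuppRight k k B R ℕ).symm.toLinearMap := by
  refine Finsupp.lhom_ext fun i u => ?_
  have coeffEquiv_symm (a : ℕ →₀ R) : hT.coeffEquiv.symm a = leftEval ι x a := rfl
  induction u using TensorProduct.induction_on with
  | zero => simp
  | add u v hu hv => rw [Finsupp.single_add, map_add, map_add, hu, hv]
  | tmul b r =>
    simp [leftEval_single, coeffEquiv_symm, TensorProduct.finsuppRight_symm_apply_single]

theorem baseChange :
    IsOreExtension k (Algebra.TensorProduct.congr AlgEquiv.refl σ) (δ.lTensor B)
      (Algebra.TensorProduct.map (AlgHom.id k B) ι) ((1 : B) ⊗ₜ[k] x) where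
  isSigmaDerivation u v := by
    induction u using TensorProduct.induction_on with
    | zero => simp
    | add u u' hu hu' => simp only [add_mul, map_add, hu, hu']; abel
    | tmul b r =>
      induction v using TensorProduct.induction_on with
      | zero => simp
      | add v v' hv hv' => simp only [mul_add, map_add, hv, hv']; abel
      | tmul c s => simp [hT.isSigmaDerivation, TensorProduct.tmul_add]
  injective := Module.Flat.lTensor_preserves_injective_linearMap ι.toLinearMap hT.injective
  rel u := by
    induction u using TensorProduct.induction_on with
    | zero => simp
    | add u v hu hv => simp only [mul_add, map_add, hu, hv, add_mul]; abel
    | tmul b r => simp [hT.rel, TensorProduct.tmul_add]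
  free := by
    rw [← leftEval_bijective_iff, hT.leftEval_baseChange]
    exact LinearEquiv.bijective _

theorem coeff_baseChange (i : ℕ) (u : B ⊗[k] T) :
    (hT.baseChange B).coeff i u = (hT.coeff i).lTensor B u := by
  induction u using (hT.baseChange B).monomial_induction with
  | add u v hu hv => rw [map_add, map_add, hu, hv]
  | monomial j u =>
    rw [coeff_ι_mul_pow]
    induction u using TensorProduct.induction_on with
    | zero => simp
    | add u v hu hv => simp only [map_add, add_mul, ← hu, ← hv]; split_ifs <;> simp
    | tmul b r => simp [coeff_ι_mul_pow, apply_ite (b ⊗ₜ[k] ·)]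

theorem noZeroDivisors_tensor_left [NoZeroDivisors (R ⊗[k] R)] : NoZeroDivisors (T ⊗[k] R) :=
  have := (hT.baseChange R).noZeroDivisors
  (Algebra.TensorProduct.comm k T R).injective.noZeroDivisors _ (map_zero _) (map_mul _)

theorem rTensor_mem_degreeLE {B : Type*} [Ring B] [Algebra k B] (L : B →ₗ[k] B) {n : ℕ}
    {u : B ⊗[k] T} (hu : u ∈ (hT.baseChange B).degreeLE n) :
    L.rTensor T u ∈ (hT.baseChange B).degreeLE n := by
  refine (mem_degreeLE _).2 fun i hi => ?_
  rw [hT.coeff_baseChange, ← LinearMap.comp_apply, LinearMap.lTensor_comp_rTensor,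
    ← LinearMap.rTensor_comp_lTensor, LinearMap.comp_apply, ← hT.coeff_baseChange,
    (mem_degreeLE _).1 hu i hi, map_zero]

theorem sliceLeft_mem_degreeLE {B : Type*} [Ring B] [Algebra k B] (f : B →ₗ[k] k) {n : ℕ}
    {u : B ⊗[k] T} (hu : u ∈ (hT.baseChange B).degreeLE n) : sliceLeft T f u ∈ hT.degreeLE n :=
  hT.mem_degreeLE.2 fun i hi => by
    rw [← sliceLeft_lTensor, ← hT.coeff_baseChange, (mem_degreeLE _).1 hu i hi, map_zero]

end BaseChange

section Coaction

variable {k R T : Type*} [Field k] [Ring R] [Algebra k R] [Ring T] [Algebra k T]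
  {σ : R ≃ₐ[k] R} {δ : R →ₗ[k] R} {ι : R →ₐ[k] T} {x : T}

theorem coeff_map_ne_zero (hT : IsOreExtension k σ δ ι x)
    {R' T' : Type*} [Ring R'] [Algebra k R'] [NoZeroDivisors R'] [Ring T'] [Algebra k T']
    {σ' : R' ≃ₐ[k] R'} {δ' : R' →ₗ[k] R'} {ι' : R' →ₐ[k] T'} {x' : T'}
    (hT' : IsOreExtension k σ' δ' ι' x') (D : T →ₐ[k] T') (hD : Function.Injective D)
    (hDι : ∀ r, D (ι r) ∈ ι'.range) {n : ℕ} (hn : 0 < n) (hx : D x ∈ hT'.degreeLE n)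
    (hx' : hT'.coeff n (D x) ≠ 0) {m : ℕ} {t : T} (ht : t ∈ hT.degreeLE m)
    (ht' : hT.coeff m t ≠ 0) :
    hT'.coeff (m * n) (D t) ≠ 0 := by
  have : Nontrivial R' := ⟨_, _, hx'⟩
  choose g hg using hDι
  have g_ne_zero : g (hT.coeff m t) ≠ 0 := by
    intro h
    have D_eq_zero : D (ι (hT.coeff m t)) = 0 := by
      rw [← hg, h]
      exact map_zero ι'
    exact ht' (hT.injective (hD (by rw [D_eq_zero, map_zero, map_zero])))
  have D_monomial (i : ℕ) : D (ι (hT.coeff i t) * x ^ i) = ι' (g (hT.coeff i t)) * D x ^ i := by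
    rw [map_mul, map_pow, ← hg]
    rfl
  rw [hT.eq_sum_of_mem_degreeLE ht, map_sum, map_sum, Finset.sum_range_succ, Finset.sum_eq_zero,
    zero_add, D_monomial, coeff_ι_mul]
  · exact mul_ne_zero g_ne_zero (hT'.coeff_pow_ne_zero hx hx' m)
  · intro i hi
    have hlt : i * n < m * n := Nat.mul_lt_mul_of_pos_right (Finset.mem_range.1 hi) hn
    rw [D_monomial, coeff_ι_mul, hT'.mem_degreeLE.1 (hT'.pow_mem_degreeLE hx i) _ hlt, mul_zero]

/- If `D x` had degree `n ≥ 2`, a slice `t` of `D x` would have degree `n`, so `D t` would have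
degree `n²`; but `D t = (L ⊗ id) (D x)` has degree at most `n`. -/
theorem map_var_mem_degreeLE_one (hT : IsOreExtension k σ δ ι x)
    {B : Type*} [Ring B] [Algebra k B] [NoZeroDivisors (B ⊗[k] R)]
    (D : T →ₐ[k] B ⊗[k] T) (hD : Function.Injective D)
    (hDι : ∀ r, D (ι r) ∈ (Algebra.TensorProduct.map (AlgHom.id k B) ι).range)
    (hDx : ∀ f : B →ₗ[k] k, ∃ L : B →ₗ[k] B, D (sliceLeft T f (D x)) = L.rTensor T (D x)) :
    D x ∈ (hT.baseChange B).degreeLE 1 := by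
  have hB := hT.baseChange B
  obtain hDx0 | hDx0 := eq_or_ne (D x) 0
  · rw [hDx0]; exact zero_mem _
  obtain ⟨n, hn, hn'⟩ := hB.exists_mem_degreeLE_coeff_ne_zero hDx0
  obtain hn1 | hn1 := le_or_gt n 1
  · exact hB.degreeLE_mono hn1 hn
  obtain ⟨f, hf⟩ := exists_sliceLeft_ne_zero hn'
  obtain ⟨L, hL⟩ := hDx f
  rw [hT.coeff_baseChange, sliceLeft_lTensor] at hf
  have D_slice_mem : D (sliceLeft T f (D x)) ∈ hB.degreeLE n := hL ▸ hT.rTensor_mem_degreeLE L hn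
  have coeff_D_slice : hB.coeff (n * n) (D (sliceLeft T f (D x))) ≠ 0 :=
    hT.coeff_map_ne_zero hB D hD hDι (by lia) hn hn' (hT.sliceLeft_mem_degreeLE f hn) hf
  exact absurd (hB.mem_degreeLE.1 D_slice_mem _ (by nlinarith)) coeff_D_slice

theorem eq_of_mem_degreeLE_one (hT : IsOreExtension k σ δ ι x) {t : T} (ht : t ∈ hT.degreeLE 1) :
    t = ι (hT.coeff 0 t) + ι (hT.coeff 1 t) * x := by
  simpa [Finset.sum_range_succ] using hT.eq_sum_of_mem_degreeLE ht

end Coaction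

section Biaffine

variable {k R T : Type*} [Field k] [Ring R] [Algebra k R] [Ring T] [Algebra k T]

/-- The element `s (1 ⊗ x) + t (x ⊗ 1) + v (x ⊗ x) + w` of `T ⊗ T`, for `s t v w : R ⊗ R`: over an
Ore extension this is the general element of degree at most one in each tensor factor. -/
noncomputable def biaffine (ι : R →ₐ[k] T) (x : T) (s t v w : R ⊗[k] R) : T ⊗[k] T :=
  Algebra.TensorProduct.map ι ι s * (1 ⊗ₜ x) + Algebra.TensorProduct.map ι ι t * (x ⊗ₜ 1) +
    Algebra.TensorProduct.map ι ι v * (x ⊗ₜ x) + Algebra.TensorProduct.map ι ι w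

theorem map_biaffine {A A' : Type*} [Ring A] [Algebra k A] [Ring A'] [Algebra k A']
    {ι : R →ₐ[k] T} {φ : T →ₗ[k] A} {ψ : T →ₗ[k] A'} {α : R →ₐ[k] A} {α' : R →ₐ[k] A'}
    (hφ : ∀ r t, φ (ι r * t) = α r * φ t) (hψ : ∀ r t, ψ (ι r * t) = α' r * ψ t)
    (x : T) (s t v w : R ⊗[k] R) :
    TensorProduct.map φ ψ (biaffine ι x s t v w) =
      Algebra.TensorProduct.map α α' s * (φ 1 ⊗ₜ ψ x) +
        Algebra.TensorProduct.map α α' t * (φ x ⊗ₜ ψ 1) +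
        Algebra.TensorProduct.map α α' v * (φ x ⊗ₜ ψ x) +
        Algebra.TensorProduct.map α α' w * (φ 1 ⊗ₜ ψ 1) := by
  rw [biaffine, ← mul_one (Algebra.TensorProduct.map ι ι w), Algebra.TensorProduct.one_def]
  simp only [map_add, tensorMap_map_mul hφ hψ, TensorProduct.map_tmul]

variable {σ : R ≃ₐ[k] R} {δ : R →ₗ[k] R} {ι : R →ₐ[k] T} {x : T} (hT : IsOreExtension k σ δ ι x)
include hT

theorem map_coeff_map_mul (i j : ℕ) (s : R ⊗[k] R) (u : T ⊗[k] T) :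
    TensorProduct.map (hT.coeff i) (hT.coeff j) (Algebra.TensorProduct.map ι ι s * u) =
      s * TensorProduct.map (hT.coeff i) (hT.coeff j) u := by
  simpa using tensorMap_map_mul (α := AlgHom.id k R) (α' := AlgHom.id k R)
    (fun r t => hT.coeff_ι_mul r t i) (fun r t => hT.coeff_ι_mul r t j) s u

/-- The projection of `T` onto its elements of degree at most one. -/
noncomputable def truncate : T →ₗ[k] T :=
  ι.toLinearMap ∘ₗ hT.coeff 0 + LinearMap.mulRight k x ∘ₗ ι.toLinearMap ∘ₗ hT.coeff 1

theorem truncate_apply (t : T) : hT.truncate t = ι (hT.coeff 0 t) + ι (hT.coeff 1 t) * x := rfl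

theorem lTensor_truncate {B : Type*} [Ring B] [Algebra k B] {u : B ⊗[k] T}
    (hu : u ∈ (hT.baseChange B).degreeLE 1) : hT.truncate.lTensor B u = u := by
  have lTensor_eq (z : B ⊗[k] T) : hT.truncate.lTensor B z =
      Algebra.TensorProduct.map (AlgHom.id k B) ι ((hT.coeff 0).lTensor B z) +
        Algebra.TensorProduct.map (AlgHom.id k B) ι ((hT.coeff 1).lTensor B z) * (1 ⊗ₜ x) := by
    induction z using TensorProduct.induction_on with
    | zero => simp
    | add z z' hz hz' => simp only [map_add, add_mul, hz, hz']; abel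
    | tmul b t => simp [truncate_apply, TensorProduct.tmul_add]
  rw [lTensor_eq, ← hT.coeff_baseChange, ← hT.coeff_baseChange]
  exact ((hT.baseChange B).eq_of_mem_degreeLE_one hu).symm

theorem map_truncate (u : T ⊗[k] T) :
    TensorProduct.map hT.truncate hT.truncate u =
      biaffine ι x (TensorProduct.map (hT.coeff 0) (hT.coeff 1) u)
        (TensorProduct.map (hT.coeff 1) (hT.coeff 0) u)
        (TensorProduct.map (hT.coeff 1) (hT.coeff 1) u)
        (TensorProduct.map (hT.coeff 0) (hT.coeff 0) u) := by
  induction u using TensorProduct.induction_on with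
  | zero => simp [biaffine]
  | add u u' hu hu' => rw [map_add, hu, hu']; simp only [biaffine, map_add, add_mul]; abel
  | tmul a b =>
    simp only [biaffine, TensorProduct.map_tmul, truncate_apply, TensorProduct.add_tmul,
      TensorProduct.tmul_add, Algebra.TensorProduct.map_tmul, Algebra.TensorProduct.tmul_mul_tmul,
      mul_one]
    abel

theorem exists_eq_biaffine {u : T ⊗[k] T} (hu : u ∈ (hT.baseChange T).degreeLE 1)
    (hu' : TensorProduct.comm k T T u ∈ (hT.baseChange T).degreeLE 1) :
    ∃ s t v w, u = biaffine ι x s t v w := by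
  have rTensor_truncate : hT.truncate.rTensor T u = u :=
    (TensorProduct.comm k T T).injective <| by
      rw [← LinearMap.lTensor_comm, hT.lTensor_truncate hu']
  refine ⟨_, _, _, _, Eq.trans ?_ (hT.map_truncate u)⟩
  rw [← LinearMap.rTensor_comp_lTensor, LinearMap.comp_apply, hT.lTensor_truncate hu,
    rTensor_truncate]

end Biaffine

section Comultiplication

open Coalgebra

variable {k R T : Type*} [Field k] [Ring R] [Bialgebra k R] [Ring T] [Bialgebra k T]
  [NoZeroDivisors (R ⊗[k] R)] {σ : R ≃ₐ[k] R} {δ : R →ₗ[k] R} {ι : R →ₐ[k] T} {x : T}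
  (hT : IsOreExtension k σ δ ι x)
  (hΔ : ∀ r, comul (ι r) = Algebra.TensorProduct.map ι ι (comul (R := k) r))
include hT hΔ

theorem comul_var_mem_degreeLE_one : comul x ∈ (hT.baseChange T).degreeLE 1 :=
  have := hT.noZeroDivisors_tensor_left
  hT.map_var_mem_degreeLE_one (Bialgebra.comulAlgHom k T) comul_injective
    (fun r => (hΔ r).symm ▸ tensorMap_mem_range (comul r))
    fun f => ⟨rightHit f, comul_rightHit f x⟩

theorem comm_comul_var_mem_degreeLE_one :
    TensorProduct.comm k T T (comul x) ∈ (hT.baseChange T).degreeLE 1 := by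
  have := hT.noZeroDivisors_tensor_left
  refine hT.map_var_mem_degreeLE_one
    ((Algebra.TensorProduct.comm k T T).toAlgHom.comp (Bialgebra.comulAlgHom k T))
    ((TensorProduct.comm k T T).injective.comp comul_injective) (fun r => ?_)
    fun f => ⟨leftHit f, ?_⟩
  · have comm_map (s : R ⊗[k] R) :
        TensorProduct.comm k T T (Algebra.TensorProduct.map ι ι s) =
          Algebra.TensorProduct.map ι ι (TensorProduct.comm k R R s) := by
      induction s using TensorProduct.induction_on <;> simp_all
    have comm_comul : TensorProduct.comm k T T (comul (ι r)) =
        Algebra.TensorProduct.map ι ι (TensorProduct.comm k R R (comul r)) := by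
      rw [hΔ, comm_map]
    exact comm_comul ▸ tensorMap_mem_range _
  · change TensorProduct.comm k T T (comul (sliceLeft T f (TensorProduct.comm k T T (comul x)))) =
      (leftHit f).rTensor T (TensorProduct.comm k T T (comul x))
    rw [sliceLeft_comm, ← leftHit_apply, comul_leftHit, LinearMap.rTensor_comm]

theorem rightHit_var_mem_degreeLE_one (f : T →ₗ[k] k) : rightHit f x ∈ hT.degreeLE 1 :=
  hT.sliceLeft_mem_degreeLE f (hT.comul_var_mem_degreeLE_one hΔ)

theorem leftHit_var_mem_degreeLE_one (f : T →ₗ[k] k) : leftHit f x ∈ hT.degreeLE 1 := by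
  rw [leftHit_apply, ← sliceLeft_comm]
  exact hT.sliceLeft_mem_degreeLE f (hT.comm_comul_var_mem_degreeLE_one hΔ)

end Comultiplication

section Vanishing

open Coalgebra

variable {k R T : Type*} [Field k] [Ring R] [Bialgebra k R] [Ring T] [Bialgebra k T]
  {σ : R ≃ₐ[k] R} {δ : R →ₗ[k] R} {ι : R →ₐ[k] T} {x : T} (hT : IsOreExtension k σ δ ι x)

/-- The functional `∑ ι(rᵢ) xⁱ ↦ ε(r₁)` on `T`, which kills `1` and picks out the terms of a
biaffine element that involve `x` in a given tensor factor. -/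
noncomputable def counitCoeffOne : T →ₗ[k] k :=
  counit ∘ₗ hT.coeff 1

theorem counitCoeffOne_ι_mul (r : R) (t : T) :
    hT.counitCoeffOne (ι r * t) = counit (R := k) r * hT.counitCoeffOne t := by
  simp [counitCoeffOne, coeff_ι_mul]

theorem counitCoeffOne_one : hT.counitCoeffOne 1 = 0 := by
  simp [counitCoeffOne, coeff_one]

theorem counitCoeffOne_var : hT.counitCoeffOne x = 1 := by
  simp [counitCoeffOne, coeff_var]

theorem rightHit_counitCoeffOne_one : rightHit hT.counitCoeffOne 1 = 0 := by
  rw [rightHit_apply, Bialgebra.comul_one, Algebra.TensorProduct.one_def, sliceLeft_tmul,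
    counitCoeffOne_one, zero_smul]

theorem leftHit_counitCoeffOne_one : leftHit hT.counitCoeffOne 1 = 0 := by
  rw [leftHit_apply, Bialgebra.comul_one, Algebra.TensorProduct.one_def, sliceRight_tmul,
    counitCoeffOne_one, zero_smul]

variable {s t v w : R ⊗[k] R}
  (hΔ : ∀ r, comul (ι r) = Algebra.TensorProduct.map ι ι (comul (R := k) r))
  (hx : comul x = biaffine ι x s t v w)
include hT hΔ hx

theorem comul_rightHit_var :
    comul (rightHit hT.counitCoeffOne x) =
      Algebra.TensorProduct.map ι ι t * (rightHit hT.counitCoeffOne x ⊗ₜ 1) +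
        Algebra.TensorProduct.map ι ι v * (rightHit hT.counitCoeffOne x ⊗ₜ x) := by
  rw [comul_rightHit, hx, LinearMap.rTensor, map_biaffine (α' := ι)
    (rightHit_algHom_mul hΔ hT.counitCoeffOne_ι_mul) (fun _ _ => rfl), rightHit_counitCoeffOne_one]
  simp

theorem coassoc_var_counitCoeffOne :
    Algebra.TensorProduct.map ι ι t * (leftHit hT.counitCoeffOne x ⊗ₜ 1) +
        Algebra.TensorProduct.map ι ι v * (leftHit hT.counitCoeffOne x ⊗ₜ x) =
      Algebra.TensorProduct.map ι ι s * (1 ⊗ₜ rightHit hT.counitCoeffOne x) +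
        Algebra.TensorProduct.map ι ι v * (x ⊗ₜ rightHit hT.counitCoeffOne x) := by
  have coassoc := rTensor_leftHit_comul hT.counitCoeffOne x
  rw [hx, LinearMap.rTensor, LinearMap.lTensor,
    map_biaffine (α' := ι) (leftHit_algHom_mul hΔ hT.counitCoeffOne_ι_mul) (fun _ _ => rfl),
    map_biaffine (α := ι) (fun _ _ => rfl) (rightHit_algHom_mul hΔ hT.counitCoeffOne_ι_mul),
    leftHit_counitCoeffOne_one, rightHit_counitCoeffOne_one] at coassoc
  simpa using coassoc

theorem exists_coeff_one_hit_eq_algebraMap [NoZeroDivisors (R ⊗[k] R)] (hv : v ≠ 0) :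
    ∃ c : k, c ≠ 0 ∧ hT.coeff 1 (leftHit hT.counitCoeffOne x) = algebraMap k R c ∧
      hT.coeff 1 (rightHit hT.counitCoeffOne x) = algebraMap k R c := by
  have coassoc (i j : ℕ) := congrArg (TensorProduct.map (hT.coeff i) (hT.coeff j))
    (hT.coassoc_var_counitCoeffOne hΔ hx)
  simp only [map_add, map_coeff_map_mul, TensorProduct.map_tmul, coeff_one, coeff_var] at coassoc
  have coassoc_one_one := coassoc 1 1
  have coassoc_zero_one := coassoc 0 1
  simp only [zero_ne_one, if_false, if_true, one_ne_zero, TensorProduct.tmul_zero,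
    TensorProduct.zero_tmul, mul_zero, zero_add, add_zero] at coassoc_one_one coassoc_zero_one
  obtain ⟨c, hleft, hright⟩ :=
    exists_algebraMap_eq_of_tmul_one_eq (mul_left_cancel₀ hv coassoc_one_one)
  refine ⟨c, ?_, hleft, hright⟩
  rintro rfl
  rw [hright, map_zero, TensorProduct.tmul_zero, mul_zero] at coassoc_zero_one
  have coeff_zero_leftHit : hT.coeff 0 (leftHit hT.counitCoeffOne x) = 0 := by
    simpa using congrArg (sliceRight R (counit (R := k)))
      ((mul_eq_zero_iff_left hv).1 coassoc_zero_one)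
  have leftHit_eq_zero : leftHit hT.counitCoeffOne x = 0 := by
    rw [hT.eq_of_mem_degreeLE_one (hT.leftHit_var_mem_degreeLE_one hΔ _), coeff_zero_leftHit, hleft]
    simp
  have one_eq_zero : (1 : k) = 0 := by
    rw [← hT.counitCoeffOne_var, ← counit_leftHit, leftHit_eq_zero, map_zero]
  exact one_ne_zero one_eq_zero

theorem smul_comul_rightHit_var [NoZeroDivisors (R ⊗[k] R)] {c : k}
    (hleft : hT.coeff 1 (leftHit hT.counitCoeffOne x) = algebraMap k R c)
    (hright : hT.coeff 1 (rightHit hT.counitCoeffOne x) = algebraMap k R c) :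
    c • comul (rightHit hT.counitCoeffOne x) = Algebra.TensorProduct.map ι ι v *
      (rightHit hT.counitCoeffOne x ⊗ₜ rightHit hT.counitCoeffOne x) := by
  have coassoc := congrArg (TensorProduct.map (hT.coeff 1) (hT.coeff 0))
    (hT.coassoc_var_counitCoeffOne hΔ hx)
  set z := rightHit hT.counitCoeffOne x
  have coassoc_one_zero : c • t = v * (1 ⊗ₜ hT.coeff 0 z) := by
    simpa [map_coeff_map_mul, coeff_one, coeff_var, hleft, Algebra.algebraMap_eq_smul_one,
      ← TensorProduct.smul_tmul', ← Algebra.TensorProduct.one_def] using coassoc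
  have z_mem : z ∈ hT.degreeLE 1 := hT.rightHit_var_mem_degreeLE_one hΔ _
  have z_eq : z = ι (hT.coeff 0 z) + c • x := by
    conv_lhs => rw [hT.eq_of_mem_degreeLE_one z_mem, hright]
    simp [Algebra.smul_def]
  calc c • comul z
      = Algebra.TensorProduct.map ι ι (c • t) * (z ⊗ₜ 1) +
          c • (Algebra.TensorProduct.map ι ι v * (z ⊗ₜ x)) := by
        rw [hT.comul_rightHit_var hΔ hx, smul_add, map_smul, smul_mul_assoc]
    _ = Algebra.TensorProduct.map ι ι v * (z ⊗ₜ (ι (hT.coeff 0 z) + c • x)) := by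
        rw [coassoc_one_zero, map_mul, mul_assoc]
        simp [TensorProduct.tmul_add, mul_add]
    _ = Algebra.TensorProduct.map ι ι v * (z ⊗ₜ z) := by rw [← z_eq]

end Vanishing

open Coalgebra in
theorem biaffine_quadratic_eq_zero {k R T : Type*} [Field k] [Ring R] [Bialgebra k R]
    [NoZeroDivisors (R ⊗[k] R)] [Ring T] [HopfAlgebra k T] {σ : R ≃ₐ[k] R} {δ : R →ₗ[k] R}
    {ι : R →ₐ[k] T} {x : T} {s t v w : R ⊗[k] R} (hT : IsOreExtension k σ δ ι x)
    (hΔ : ∀ r, comul (ι r) = Algebra.TensorProduct.map ι ι (comul (R := k) r))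
    (hx : comul x = biaffine ι x s t v w) : v = 0 := by
  by_contra hv
  have : Nontrivial R := Bialgebra.nontrivial (R := k)
  have : NoZeroDivisors R :=
    (Algebra.TensorProduct.includeLeft_injective (R := k) (S := k) (A := R) (B := R)
      (algebraMap k R).injective).noZeroDivisors _ (map_zero _) (map_mul _)
  obtain ⟨c, hc, hleft, hright⟩ := hT.exists_coeff_one_hit_eq_algebraMap hΔ hx hv
  set z := rightHit hT.counitCoeffOne x with hz
  have comul_z : comul z = (c⁻¹ • (Algebra.TensorProduct.map ι ι v * (z ⊗ₜ 1))) * (1 ⊗ₜ z) := by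
    rw [smul_mul_assoc, mul_assoc, Algebra.TensorProduct.tmul_mul_tmul, mul_one, one_mul,
      eq_inv_smul_iff₀ hc, hT.smul_comul_rightHit_var hΔ hx hleft hright]
  have counit_z : counit (R := k) z = 1 := by rw [hz, counit_rightHit, counitCoeffOne_var]
  obtain ⟨u, hu⟩ := exists_mul_eq_one_of_comul_eq comul_z counit_z
  have coeff_one_z := hT.mem_degreeLE.1 (hT.mem_degreeLE_zero_of_mul_eq_one hu) 1 one_pos
  exact hc (by simpa using hright.symm.trans coeff_one_z)

open Coalgebra in
theorem exists_comul_var_eq {k R T : Type*} [Field k] [Ring R] [Bialgebra k R]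
    [NoZeroDivisors (R ⊗[k] R)] [Ring T] [HopfAlgebra k T] {σ : R ≃ₐ[k] R} {δ : R →ₗ[k] R}
    {ι : R →ₐ[k] T} {x : T} (hT : IsOreExtension k σ δ ι x)
    (hΔ : ∀ r, comul (ι r) = Algebra.TensorProduct.map ι ι (comul (R := k) r)) :
    ∃ s t w, comul x = Algebra.TensorProduct.map ι ι s * (1 ⊗ₜ x) +
      Algebra.TensorProduct.map ι ι t * (x ⊗ₜ 1) + Algebra.TensorProduct.map ι ι w := by
  obtain ⟨s, t, v, w, hx⟩ := hT.exists_eq_biaffine (hT.comul_var_mem_degreeLE_one hΔ)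
    (hT.comm_comul_var_mem_degreeLE_one hΔ)
  have v_eq_zero := hT.biaffine_quadratic_eq_zero hΔ hx
  exact ⟨s, t, w, by rw [hx, v_eq_zero, biaffine, map_zero, zero_mul, add_zero]⟩

end IsOreExtension

/-- The Mathlib Hopf algebra with the structure maps of `H`. -/
noncomputable abbrev HopfAlgebraStructure.toHopfAlgebra {k T : Type*} [Field k] [Ring T]
    [Algebra k T] (H : HopfAlgebraStructure k T) : HopfAlgebra k T :=
  letI : Coalgebra k T :=
    { comul := H.comul
      counit := H.counit
      coassoc := LinearMap.ext fun t => (LinearEquiv.eq_symm_apply _).1 (H.coassoc t)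
      rTensor_counit_comp_comul := LinearMap.ext fun t =>
        (TensorProduct.lid k T).injective ((H.counit_comul t).trans (by simp))
      lTensor_counit_comp_comul := LinearMap.ext fun t =>
        (TensorProduct.rid k T).injective ((H.comul_counit t).trans (by simp)) }
  letI : Bialgebra k T :=
    Bialgebra.mk' k T H.counit_one (H.counit_mul _ _) H.comul_one (H.comul_mul _ _)
  { antipode := H.antipode
    mul_antipode_rTensor_comul := LinearMap.ext H.antipode_mul_id
    mul_antipode_lTensor_comul := LinearMap.ext H.id_mul_antipode }

theorem stmt2_general {k R T : Type*} [Field k] [Ring R] [Bialgebra k R]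
    [NoZeroDivisors (R ⊗[k] R)] [Ring T] [HopfAlgebra k T] (σ : R ≃ₐ[k] R)
    (δ : R →ₗ[k] R) (ι : R →ₐ[k] T) (x : T) (hT : IsOreExtension k σ δ ι x)
    (hΔ : ∀ r : R, Coalgebra.comul (ι r) =
      TensorProduct.map ι.toLinearMap ι.toLinearMap (Coalgebra.comul (R := k) r)) :
    ∃ (y : T) (δ' : R →ₗ[k] R),
      IsOreExtension k σ δ' ι y ∧
      Coalgebra.counit (R := k) y = 0 ∧
      ∃ s t w : R ⊗[k] R,
        Coalgebra.comul y
          = TensorProduct.map ι.toLinearMap ι.toLinearMap s * ((1 : T) ⊗ₜ[k] y)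
            + TensorProduct.map ι.toLinearMap ι.toLinearMap t * (y ⊗ₜ[k] (1 : T))
            + TensorProduct.map ι.toLinearMap ι.toLinearMap w := by
  have hT' := hT.sub_ι (algebraMap k R (Coalgebra.counit x))
  refine ⟨_, _, hT', ?_, hT'.exists_comul_var_eq hΔ⟩
  rw [map_sub, AlgHom.commutes, Bialgebra.counit_algebraMap, sub_self]

/-- **Lemma 2.1.** Let `R` be a noetherian Hopf `k`-algebra with `R ⊗ₖ R` a domain and suppose
the Ore extension `T = R[x; σ, δ]` admits a Hopf algebra structure with `R` a Hopf subalgebra.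
Then after a change of the variable `x` (with corresponding adjustments of `σ` and `δ`) one can
ensure `ε(x) = 0` and `Δ(x) = s(1 ⊗ x) + t(x ⊗ 1) + w` for some `s, t, w ∈ R ⊗ₖ R`. -/
theorem stmt2 {k R T : Type*} [Field k] [Ring R] [HopfAlgebra k R]
    [IsNoetherianRing R] [IsDomain (R ⊗[k] R)] [Ring T] [Algebra k T]
    (σ : R ≃ₐ[k] R) (δ : R →ₗ[k] R) (ι : R →ₐ[k] T) (x : T)
    (hT : IsOreExtension k σ δ ι x)
    (H : HopfAlgebraStructure k T) (hH : ExtendsHopf k ι H) :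
    ∃ (y : T) (σ' : R ≃ₐ[k] R) (δ' : R →ₗ[k] R),
      IsOreExtension k σ' δ' ι y ∧
      H.counit y = 0 ∧
      ∃ s t w : R ⊗[k] R,
        H.comul y
          = TensorProduct.map ι.toLinearMap ι.toLinearMap s * ((1 : T) ⊗ₜ[k] y)
            + TensorProduct.map ι.toLinearMap ι.toLinearMap t * (y ⊗ₜ[k] (1 : T))
            + TensorProduct.map ι.toLinearMap ι.toLinearMap w := by
  let _ := H.toHopfAlgebra
  obtain ⟨y, δ', h⟩ := stmt2_general σ δ ι x hT hH.2.1
  exact ⟨y, σ, δ', h⟩
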